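/- Let θ : ℝ → ℝ be smooth, let R ∈ (0,∞), assume Hypothesis (H_R) holds, and assume K := sup_{t ∈ ℝ} θ(t) satisfies 0 < K < ∞. Set c := π/(R·(1 − e^{−π²/(2R√K)})). Then for every x ∈ ℝ there exists a nonnegative Borel measure μ_x on ℝ with support contained in [−c, c] such that for every integer n ≥ 1, 𝒮_n^{θ,g_R}(x) = n! · ∫ t^{n−1} dμ_x(t). -/

import Mathlib

noncomputable section

/-- `g_R(t) = -(R/π)·log(1 - (π/R)·t)`. -/
def gR (R t : ℝ) : ℝ := -(R / Real.pi) * Real.log (1 - (Real.pi / R) * t)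

/-- `f` is a (smooth) solution of `f'' + θ·f = 0`. -/
def IsSolution (θ f : ℝ → ℝ) : Prop :=
  ContDiff ℝ (⊤ : ℕ∞) f ∧ ∀ t, deriv (deriv f) t + θ t * f t = 0

/-- `f₁, f₂` is the fundamental pair of solutions of `f'' + θ·f = 0` at `x`:
`f₁(x) = f₂'(x) = 1`, `f₂(x) = f₁'(x) = 0`. -/
def IsFundPair (θ : ℝ → ℝ) (x : ℝ) (f₁ f₂ : ℝ → ℝ) : Prop :=
  IsSolution θ f₁ ∧ IsSolution θ f₂ ∧
  f₁ x = 1 ∧ deriv f₁ x = 0 ∧ f₂ x = 0 ∧ deriv f₂ x = 1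

/-- The `n`-th `g_R`-Schwarzian `𝒮_n^{θ,g_R}(x)`, computed from the fundamental pair
`f₁, f₂` at `x`: the `n`-th derivative at `t = 0` of `t ↦ h_x(x + g_R(t))`,
where `h_x = f₂/f₁`. -/
def SchR (R x : ℝ) (f₁ f₂ : ℝ → ℝ) (n : ℕ) : ℝ :=
  iteratedDeriv n (fun t => f₂ (x + gR R t) / f₁ (x + gR R t)) 0

/-- The determinant `𝒟_n^{θ,g_R}(x)` of the `n×n` Hankel matrix with `(i,j)` entry
`𝒮_{i+j-1}^{θ,g_R}(x)/(i+j-1)!`. -/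
def DetR (R x : ℝ) (f₁ f₂ : ℝ → ℝ) (n : ℕ) : ℝ :=
  (Matrix.of fun i j : Fin n =>
    SchR R x f₁ f₂ (i.1 + j.1 + 1) / (Nat.factorial (i.1 + j.1 + 1) : ℝ)).det

/-- Hypothesis (H_R): `f₁, f₂` are linearly independent solutions of `f'' + θ·f = 0`
(constant Wronskian `W = f₁f₂' - f₁'f₂ ≠ 0`) and `h = f₂/f₁` admits a meromorphic
extension `H` to the strip `{|Im z| < R}` (holomorphic off the real zeros of `f₁`,
with poles at those zeros) which satisfies `W·Im H(z)·Im z > 0` for `0 < Im z < R`. -/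
def HypR (θ : ℝ → ℝ) (R : ℝ) : Prop :=
  ∃ (f₁ f₂ : ℝ → ℝ) (H : ℂ → ℂ),
    IsSolution θ f₁ ∧ IsSolution θ f₂ ∧
    f₁ 0 * deriv f₂ 0 - deriv f₁ 0 * f₂ 0 ≠ 0 ∧
    (∀ t : ℝ, f₁ t ≠ 0 → H t = ((f₂ t / f₁ t : ℝ) : ℂ)) ∧
    DifferentiableOn ℂ H
      {z : ℂ | |z.im| < R ∧ ∀ t : ℝ, f₁ t = 0 → z ≠ (t : ℂ)} ∧
    (∀ t : ℝ, f₁ t = 0 →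
      Filter.Tendsto (fun z => ‖H z‖) (nhdsWithin (t : ℂ) {(t : ℂ)}ᶜ) Filter.atTop) ∧
    (∀ z : ℂ, 0 < z.im → z.im < R →
      0 < (f₁ 0 * deriv f₂ 0 - deriv f₁ 0 * f₂ 0) * (H z).im * z.im)

/-- `(i,j)` entry (1-based, clamped to ℕ) of the matrix `T(f,n)(t)`:
`f^{(j-i)}(t)/(j-i)!` if `i ≤ j`, and `0` otherwise. -/
def Tentry (f : ℝ → ℝ) (t : ℝ) (i j : ℕ) : ℝ :=
  if i ≤ j then iteratedDeriv (j - i) f t / (Nat.factorial (j - i) : ℝ) else 0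

end

noncomputable section

open MeasureTheory Filter

/-!
The pair at `x` is a linear image of any other basis of solutions with determinant of the sign of
the Wronskian, so `h_x` is a real Möbius transform of the given quotient `h`: it is holomorphic on
the strip `|Im z| < R` off the real zeros of `f₁`, and `Im h_x(z)` has the sign of `Im z`. Sturm
comparison with `cos (√K (t - x))` shows that `f₁` has no zero at distance less than `π / (2√K)`
from `x`. The map `w ↦ x + g_R(w)` sends the plane slit along the real `w` with `|w| ≥ c⁻¹` into
the part of the strip where `h_x` is therefore holomorphic.

The inverse Joukowski map turns `w ↦ h_x(x + g_R(w))` into a typically real function `f` on the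
unit disc. Rogosinski: on `|z| = 1` the quotient `(1 - z²) / z` equals `-2i Im z`, whence
`(1 - z²) f(z) / z` has nonnegative real part and is given by a Herglotz measure on the circle
(a weak limit along the circles of radius `r < 1`). Transported to `[-c, c]` by `ζ ↦ c Re ζ`, this
measure represents `h_x(x + g_R(t))` as `∫ t / (1 - s t) dμ(s)`, and the geometric series
identifies the Taylor coefficients with the moments of `μ`.
-/

section Herglotz

open Metric Complex Topology

lemma exists_finiteMeasure_forall_tendsto_integral {E : Type*} [TopologicalSpace E] [T2Space E]
    [CompactSpace E] [MeasurableSpace E] [BorelSpace E] {ν : ℕ → FiniteMeasure E} {C : NNReal}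
    (hν : ∀ n, (ν n).mass ≤ C) :
    ∃ μ : FiniteMeasure E, ∀ (k : C(E, ℝ)) (l : ℝ),
      Tendsto (fun n => ∫ ζ, k ζ ∂(ν n : Measure E)) atTop (𝓝 l) →
        ∫ ζ, k ζ ∂(μ : Measure E) = l := by
  obtain ⟨μ, -, hμ⟩ :=
    (isCompact_setOfPred_finiteMeasure_le_of_compactSpace E C).ultrafilter_le_nhds'
      ((hyperfilter ℕ).map ν) (Filter.mem_map.2 (univ_mem' hν))
  refine ⟨μ, fun k l hl => tendsto_nhds_unique ?_ (hl.mono_left Nat.hyperfilter_le_atTop)⟩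
  exact FiniteMeasure.tendsto_iff_forall_integral_tendsto.1 hμ
    (BoundedContinuousFunction.mkOfCompact k)

lemma exists_finiteMeasure_integral_eq_circleAverage {g : ℂ → ℝ}
    (hg : ContinuousOn g (sphere 0 1)) (hg0 : ∀ ζ ∈ sphere (0 : ℂ) 1, 0 ≤ g ζ) :
    ∃ ν : FiniteMeasure (sphere (0 : ℂ) 1), ∀ k : ℂ → ℝ, ContinuousOn k (sphere 0 1) →
      ∫ ζ, k ζ ∂(ν : Measure (sphere (0 : ℂ) 1)) =
        Real.circleAverage (fun ζ => k ζ * g ζ) 0 1 := by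
  let γ : ℝ → sphere (0 : ℂ) 1 := fun θ => ⟨circleMap 0 1 θ, circleMap_mem_sphere 0 zero_le_one θ⟩
  have hγ : Continuous γ := (continuous_circleMap 0 1).subtype_mk _
  have hgγ : Continuous fun θ => g (γ θ) :=
    hg.comp_continuous (continuous_circleMap 0 1) fun θ => (γ θ).2
  let ρ : Measure ℝ := (volume.restrict (Set.Ioc 0 (2 * Real.pi))).withDensity
    fun θ => ((2 * Real.pi)⁻¹ * g (γ θ)).toNNReal
  have : IsFiniteMeasure ρ := isFiniteMeasure_withDensity_ofReal
    ((hgγ.const_mul _).intervalIntegrable 0 (2 * Real.pi)).1.2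
  refine ⟨⟨ρ.map γ, inferInstance⟩, fun k hk => ?_⟩
  have hkγ : Continuous fun ζ : sphere (0 : ℂ) 1 => k ζ := hk.domRestrict
  calc ∫ ζ, k ζ ∂(ρ.map γ)
      = ∫ θ, k (γ θ) ∂ρ := integral_map hγ.aemeasurable hkγ.aestronglyMeasurable
    _ = ∫ θ in Set.Ioc 0 (2 * Real.pi), ((2 * Real.pi)⁻¹ * g (γ θ)).toNNReal • k (γ θ) :=
      integral_withDensity_eq_integral_smul (hgγ.const_mul _).measurable.real_toNNReal _
    _ = ∫ θ in Set.Ioc 0 (2 * Real.pi), (2 * Real.pi)⁻¹ * (k (γ θ) * g (γ θ)) := by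
      congr 1 with θ
      have h0 : 0 ≤ (2 * Real.pi)⁻¹ * g (γ θ) := mul_nonneg (by positivity) (hg0 _ (γ θ).2)
      rw [NNReal.smul_def, Real.coe_toNNReal _ h0, smul_eq_mul]
      ring
    _ = Real.circleAverage (fun ζ => k ζ * g ζ) 0 1 := by
      rw [integral_const_mul, Real.circleAverage_def, smul_eq_mul,
        intervalIntegral.integral_of_le (by positivity)]

lemma diffContOnCl_comp_real_mul {f : ℂ → ℂ} (hf : DifferentiableOn ℂ f (ball 0 1)) {r : ℝ}
    (hr : r ∈ Set.Ioo 0 1) : DiffContOnCl ℂ (fun w => f (r * w)) (ball 0 1) := by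
  refine DifferentiableOn.diffContOnCl (hf.comp (by fun_prop) fun w hw => ?_)
  rw [closure_ball _ one_ne_zero, mem_closedBall_zero_iff] at hw
  rw [mem_ball_zero_iff, norm_mul, norm_real, Real.norm_of_nonneg hr.1.le]
  nlinarith [hr.1, hr.2]

lemma tendsto_comp_real_mul {f : ℂ → ℂ} (hf : DifferentiableOn ℂ f (ball 0 1)) {z : ℂ}
    (hz : z ∈ ball 0 1) : Tendsto (fun r : ℝ => f (r * z)) (𝓝[<] 1) (𝓝 (f z)) := by
  have hfz : Tendsto f (𝓝 ((1 : ℝ) * z)) (𝓝 (f z)) := by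
    simpa using (hf.differentiableAt (isOpen_ball.mem_nhds hz)).continuousAt.tendsto
  exact hfz.comp (Continuous.tendsto (by fun_prop) 1 |>.mono_left nhdsWithin_le_nhds)

lemma continuousOn_poissonKernel_sphere {z : ℂ} (hz : z ∈ ball 0 1) :
    ContinuousOn (poissonKernel 0 z) (sphere 0 1) := by
  rw [poissonKernel_eq_re_herglotzRieszKernel]
  exact continuous_re.comp_continuousOn (by simpa using continuousOn_herglotzRieszKernel_sphere hz)

lemma poissonKernel_nonneg {z ζ : ℂ} (hz : z ∈ ball 0 1) (hζ : ζ ∈ sphere 0 1) :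
    0 ≤ poissonKernel 0 z ζ := by
  rw [mem_ball_zero_iff] at hz
  rw [mem_sphere_zero_iff_norm] at hζ
  rw [poissonKernel_def, sub_zero, sub_zero, hζ]
  have : ‖z‖ ^ 2 ≤ 1 := by nlinarith [norm_nonneg z]
  exact div_nonneg (by linarith) (by positivity)

lemma circleAverage_poissonKernel_mul_re {f : ℂ → ℂ} (hf : DiffContOnCl ℂ f (ball 0 1)) {z : ℂ}
    (hz : z ∈ ball 0 1) :
    Real.circleAverage (fun ζ => poissonKernel 0 z ζ * (f ζ).re) 0 1 = (f z).re := by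
  have hint : CircleIntegrable (poissonKernel 0 z • f) 0 1 :=
    ContinuousOn.circleIntegrable zero_le_one <| (continuousOn_poissonKernel_sphere hz).smul
      (hf.continuousOn_ball.mono sphere_subset_closedBall)
  rw [← hf.circleAverage_poissonKernel_smul hz]
  simpa [Function.comp_def] using reCLM.circleAverage_comp_comm hint

lemma re_nonneg_of_forall_sphere {f : ℂ → ℂ} (hf : DiffContOnCl ℂ f (ball 0 1))
    (hpos : ∀ ζ ∈ sphere (0 : ℂ) 1, 0 ≤ (f ζ).re) {z : ℂ} (hz : z ∈ ball 0 1) : 0 ≤ (f z).re := by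
  rw [← circleAverage_poissonKernel_mul_re hf hz]
  refine Real.circleAverage_nonneg_of_nonneg fun ζ hζ => ?_
  rw [abs_one] at hζ
  exact mul_nonneg (poissonKernel_nonneg hz hζ) (hpos ζ hζ)

theorem exists_finiteMeasure_re_eq_integral_poissonKernel {q : ℂ → ℂ}
    (hq : DifferentiableOn ℂ q (ball 0 1)) (hpos : ∀ z ∈ ball (0 : ℂ) 1, 0 ≤ (q z).re) :
    ∃ μ : FiniteMeasure (sphere (0 : ℂ) 1), ∀ z ∈ ball (0 : ℂ) 1,
      (q z).re = ∫ ζ, poissonKernel 0 z ζ ∂(μ : Measure (sphere (0 : ℂ) 1)) := by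
  obtain ⟨r, -, hr, hr1⟩ := exists_seq_strictMono_tendsto' (zero_lt_one (α := ℝ))
  have hdc := fun n => diffContOnCl_comp_real_mul hq (hr n)
  have hball {n : ℕ} {ζ : ℂ} (hζ : ζ ∈ sphere (0 : ℂ) 1) : r n * ζ ∈ ball (0 : ℂ) 1 := by
    rw [mem_sphere_zero_iff_norm] at hζ
    simpa [hζ, abs_of_pos (hr n).1] using (hr n).2
  choose ν hν using fun n => exists_finiteMeasure_integral_eq_circleAverage
    (continuous_re.comp_continuousOn ((hdc n).continuousOn_ball.mono sphere_subset_closedBall))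
    fun ζ hζ => hpos _ (hball hζ)
  have hpoisson : ∀ z ∈ ball (0 : ℂ) 1, ∀ n,
      ∫ ζ, poissonKernel 0 z ζ ∂(ν n : Measure (sphere (0 : ℂ) 1)) = (q (r n * z)).re :=
    fun z hz n => (hν n _ (continuousOn_poissonKernel_sphere hz)).trans
      (circleAverage_poissonKernel_mul_re (hdc n) hz)
  have hmass : ∀ n, (ν n).mass ≤ (q 0).re.toNNReal := by
    intro n
    have h0 : ∀ ζ : sphere (0 : ℂ) 1, poissonKernel 0 0 (ζ : ℂ) = 1 := fun ζ => by
      simp [poissonKernel_def]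
    have h1 : ((ν n).mass : ℝ) = (q 0).re := by
      have h := hpoisson 0 (mem_ball_self zero_lt_one) n
      rwa [integral_congr_ae (.of_forall h0), integral_const, smul_eq_mul, mul_one, mul_zero] at h
    rw [← h1, Real.toNNReal_coe]
  obtain ⟨μ, hμ⟩ := exists_finiteMeasure_forall_tendsto_integral hmass
  refine ⟨μ, fun z hz => (hμ ⟨_, (continuousOn_poissonKernel_sphere hz).domRestrict⟩ _ ?_).symm⟩
  refine Tendsto.congr (fun n => (hpoisson z hz n).symm) ?_
  have hr1' : Tendsto r atTop (𝓝[<] 1) :=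
    tendsto_nhdsWithin_iff.2 ⟨hr1, .of_forall fun n => (hr n).2⟩
  exact (continuous_re.tendsto _).comp ((tendsto_comp_real_mul hq hz).comp hr1')

end Herglotz

section TypicallyReal

open Metric Complex Topology

/-- Typically real functions on the unit disc (in the weak sense), not normalized at the origin. -/
structure IsTypicallyReal (f : ℂ → ℂ) : Prop where
  differentiableOn : DifferentiableOn ℂ f (ball 0 1)
  im_mul_im_nonneg : ∀ z ∈ ball (0 : ℂ) 1, 0 ≤ (f z).im * z.im

lemma re_one_sub_sq_mul_dslope {f : ℂ → ℂ} (h0 : f 0 = 0) {r : ℝ} (hr : r ≠ 0) {w : ℂ}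
    (hw : ‖w‖ = 1) :
    ((1 - w ^ 2) * dslope f 0 (r * w)).re = 2 / r * (w.im * (f (r * w)).im) := by
  have hw0 : w ≠ 0 := norm_ne_zero_iff.1 (hw ▸ one_ne_zero)
  have hr' : (r : ℂ) ≠ 0 := ofReal_ne_zero.2 hr
  have hwc : w * (starRingEnd ℂ) w = 1 := by rw [mul_conj, normSq_eq_norm_sq, hw]; simp
  have hslope : dslope f 0 (r * w) = f (r * w) / (r * w) := by
    rw [dslope_of_ne _ (mul_ne_zero hr' hw0), slope_def_field, h0, sub_zero, sub_zero]
  have hsub : (starRingEnd ℂ) w - w = -(2 * w.im : ℝ) * I := by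
    rw [← neg_sub, sub_conj]
    push_cast
    ring
  have key : (1 - w ^ 2) * dslope f 0 (r * w) = (2 / r * w.im : ℝ) * (-I * f (r * w)) := by
    calc (1 - w ^ 2) * dslope f 0 (r * w)
        = ((starRingEnd ℂ) w - w) * f (r * w) / r := by
          rw [hslope]
          generalize f (r * w) = a
          field_simp
          linear_combination -a * hwc
      _ = (2 / r * w.im : ℝ) * (-I * f (r * w)) := by
          rw [hsub]
          push_cast
          ring
  rw [key, re_ofReal_mul]
  simp [mul_assoc]

lemma IsTypicallyReal.re_one_sub_sq_mul_dslope_nonneg {f : ℂ → ℂ} (hf : IsTypicallyReal f)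
    (h0 : f 0 = 0) {z : ℂ} (hz : z ∈ ball 0 1) : 0 ≤ ((1 - z ^ 2) * dslope f 0 z).re := by
  have hd : DifferentiableOn ℂ (dslope f 0) (ball 0 1) :=
    (differentiableOn_dslope (ball_mem_nhds 0 one_pos)).2 hf.differentiableOn
  have hdilate : ∀ r ∈ Set.Ioo (0 : ℝ) 1, 0 ≤ ((1 - z ^ 2) * dslope f 0 (r * z)).re := by
    -- Only `f` is dilated: the boundary identity needs `1 - w ^ 2` itself, at `‖w‖ = 1`.
    intro r hr
    have hsq : DiffContOnCl ℂ (fun w : ℂ => 1 - w ^ 2) (ball 0 1) :=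
      Differentiable.diffContOnCl (by fun_prop)
    refine re_nonneg_of_forall_sphere (hsq.smul (diffContOnCl_comp_real_mul hd hr))
      (fun w hw => ?_) hz
    change 0 ≤ ((1 - w ^ 2) * dslope f 0 (r * w)).re
    rw [mem_sphere_zero_iff_norm] at hw
    have hrw : r * w ∈ ball (0 : ℂ) 1 := by simpa [hw, abs_of_pos hr.1] using hr.2
    have him := hf.im_mul_im_nonneg _ hrw
    rw [im_ofReal_mul] at him
    rw [re_one_sub_sq_mul_dslope h0 hr.1.ne' hw]
    have := hr.1
    have : 0 ≤ w.im * (f (r * w)).im := nonneg_of_mul_nonneg_right (by linarith) hr.1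
    positivity
  have hlim : Tendsto (fun r : ℝ => ((1 - z ^ 2) * dslope f 0 (r * z)).re) (𝓝[<] 1)
      (𝓝 ((1 - z ^ 2) * dslope f 0 z).re) :=
    (continuous_re.tendsto _).comp ((tendsto_comp_real_mul hd hz).const_mul _)
  exact ge_of_tendsto hlim (mem_of_superset (Ioo_mem_nhdsLT zero_lt_one) hdilate)

lemma poissonKernel_zero_ofReal {z : ℝ} {ζ : ℂ} (hζ : ζ ∈ sphere 0 1) :
    poissonKernel 0 z ζ = (1 - z ^ 2) / (1 - 2 * z * ζ.re + z ^ 2) := by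
  rw [mem_sphere_zero_iff_norm] at hζ
  have hζ' : ζ.re * ζ.re + ζ.im * ζ.im = 1 := by rw [← normSq_apply, normSq_eq_norm_sq, hζ, one_pow]
  rw [poissonKernel_def, sub_zero, sub_zero, hζ, norm_real, Real.norm_eq_abs, sq_abs, one_pow,
    ← normSq_eq_norm_sq, normSq_apply]
  congr 1
  simp only [sub_re, ofReal_re, sub_im, ofReal_im]
  linear_combination hζ'

theorem IsTypicallyReal.exists_finiteMeasure_re_eq_integral {f : ℂ → ℂ} (hf : IsTypicallyReal f)
    (h0 : f 0 = 0) :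
    ∃ μ : FiniteMeasure (sphere (0 : ℂ) 1), ∀ z : ℝ, |z| < 1 →
      (f z).re = ∫ ζ, z / (1 - 2 * z * (ζ : ℂ).re + z ^ 2) ∂(μ : Measure (sphere (0 : ℂ) 1)) := by
  have hq : DifferentiableOn ℂ (fun z => (1 - z ^ 2) * dslope f 0 z) (ball 0 1) :=
    DifferentiableOn.mul (by fun_prop)
      ((differentiableOn_dslope (ball_mem_nhds 0 one_pos)).2 hf.differentiableOn)
  obtain ⟨μ, hμ⟩ := exists_finiteMeasure_re_eq_integral_poissonKernel hq
    fun z hz => hf.re_one_sub_sq_mul_dslope_nonneg h0 hz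
  refine ⟨μ, fun z hz => ?_⟩
  have hz2 : 1 - z ^ 2 ≠ 0 := (sub_pos.2 ((sq_lt_one_iff_abs_lt_one z).2 hz)).ne'
  have hfz : f z = (z / (1 - z ^ 2) : ℝ) * ((1 - z ^ 2) * dslope f 0 z) := by
    have hslope : (z : ℂ) * dslope f 0 z = f z := by simpa [h0] using sub_smul_dslope f 0 (z : ℂ)
    have : (1 - z ^ 2 : ℂ) ≠ 0 := mod_cast hz2
    rw [← hslope]
    push_cast
    field_simp
  rw [hfz, re_ofReal_mul, hμ z (by simpa using hz), ← integral_const_mul]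
  congr 1 with ζ
  rw [poissonKernel_zero_ofReal ζ.2]
  field_simp

end TypicallyReal

section DoubleSlitPlane

open Metric Complex

/-- The plane slit along the two real half-lines `|w| ≥ r`. -/
def doubleSlitPlane (r : ℝ) : Set ℂ := {w | w.im = 0 → |w.re| < r}

/-- The reciprocal of the Joukowski map `(z + z⁻¹) / 2`, which takes the unit disc to
`doubleSlitPlane 1`. -/
def slitMap (z : ℂ) : ℂ := 2 * z / (1 + z ^ 2)

lemma one_add_sq_ne_zero {z : ℂ} (hz : z ∈ ball 0 1) : 1 + z ^ 2 ≠ 0 := by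
  rw [mem_ball_zero_iff] at hz
  intro h
  have h1 : ‖z‖ ^ 2 = 1 := by rw [← norm_pow, eq_neg_of_add_eq_zero_right h, norm_neg, norm_one]
  nlinarith [norm_nonneg z]

lemma slitMap_im (z : ℂ) :
    (slitMap z).im = 2 * (1 - normSq z) / normSq (1 + z ^ 2) * z.im := by
  simp [slitMap, div_im, normSq_apply, pow_two]
  ring

lemma slitMap_im_coeff_pos {z : ℂ} (hz : z ∈ ball 0 1) :
    0 < 2 * (1 - normSq z) / normSq (1 + z ^ 2) := by
  have hz1 : normSq z < 1 := by
    rw [mem_ball_zero_iff] at hz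
    rw [normSq_eq_norm_sq]
    nlinarith [norm_nonneg z]
  exact div_pos (by linarith) (normSq_pos.2 (one_add_sq_ne_zero hz))

lemma abs_two_mul_div_one_add_sq_lt_one {z : ℝ} (hz : |z| < 1) : |2 * z / (1 + z ^ 2)| < 1 := by
  rw [abs_div, abs_of_pos (by positivity : 0 < 1 + z ^ 2), div_lt_one (by positivity), abs_mul,
    abs_two, ← sq_abs z]
  nlinarith

lemma slitMap_ofReal (z : ℝ) : slitMap z = (2 * z / (1 + z ^ 2) : ℝ) := by simp [slitMap]

lemma slitMap_mem_doubleSlitPlane {z : ℂ} (hz : z ∈ ball 0 1) :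
    slitMap z ∈ doubleSlitPlane 1 := by
  intro him
  rw [slitMap_im, mul_eq_zero_iff_left (slitMap_im_coeff_pos hz).ne'] at him
  have hreal : z = (z.re : ℂ) := Complex.ext rfl him
  rw [hreal, slitMap_ofReal, ofReal_re]
  refine abs_two_mul_div_one_add_sq_lt_one ?_
  rwa [hreal, mem_ball_zero_iff, norm_real, Real.norm_eq_abs] at hz

lemma differentiableOn_slitMap : DifferentiableOn ℂ slitMap (ball 0 1) :=
  DifferentiableOn.div (by fun_prop) (by fun_prop) fun _ hz => one_add_sq_ne_zero hz

lemma exists_two_mul_div_one_add_sq_eq {t : ℝ} (ht : |t| < 1) :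
    ∃ z : ℝ, |z| < 1 ∧ 2 * z / (1 + z ^ 2) = t := by
  have ht2 : t ^ 2 < 1 := (sq_lt_one_iff_abs_lt_one t).2 ht
  have hpos : 0 < √(1 - t ^ 2) := Real.sqrt_pos.2 (by linarith)
  have hsq : √(1 - t ^ 2) ^ 2 = 1 - t ^ 2 := Real.sq_sqrt (by linarith)
  refine ⟨t / (1 + √(1 - t ^ 2)), ?_, ?_⟩
  · rw [abs_div, abs_of_pos (by positivity : 0 < 1 + √(1 - t ^ 2)), div_lt_one (by positivity)]
    linarith
  · field_simp
    linear_combination -t * hsq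

lemma div_one_sub_add_sq_eq {z s c t : ℝ} (hz : |z| < 1) (hs : |s| ≤ 1)
    (ht : 2 * z / (1 + z ^ 2) = c * t) :
    z / (1 - 2 * z * s + z ^ 2) = c / 2 * (t / (1 - c * s * t)) := by
  have hden : 0 < 1 - 2 * z * s + z ^ 2 := by
    have hzs : z * s ≤ |z| := by
      calc z * s ≤ |z| * |s| := abs_mul z s ▸ le_abs_self _
        _ ≤ |z| := mul_le_of_le_one_right (abs_nonneg z) hs
    nlinarith [sq_abs z]
  have h1 : c * t * (1 + z ^ 2) = 2 * z := by rw [← ht]; field_simp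
  have hden' : (1 - c * s * t) * (1 + z ^ 2) = 1 - 2 * z * s + z ^ 2 := by
    linear_combination -s * h1
  have : 1 - c * s * t ≠ 0 := left_ne_zero_of_mul (hden'.trans_ne hden.ne')
  calc z / (1 - 2 * z * s + z ^ 2)
      = c * t * (1 + z ^ 2) / 2 / ((1 - c * s * t) * (1 + z ^ 2)) := by rw [h1, hden']; ring
    _ = c / 2 * (t / (1 - c * s * t)) := by field_simp

theorem exists_finiteMeasure_re_eq_integral_of_doubleSlitPlane {F : ℂ → ℂ} {c : ℝ} (hc : 0 < c)
    (hF : DifferentiableOn ℂ F (doubleSlitPlane c⁻¹)) (h0 : F 0 = 0)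
    (him : ∀ w ∈ doubleSlitPlane c⁻¹, 0 ≤ (F w).im * w.im) :
    ∃ μ : Measure ℝ, IsFiniteMeasure μ ∧ μ (Set.Icc (-c) c)ᶜ = 0 ∧
      ∀ t : ℝ, |t| < c⁻¹ → (F t).re = ∫ s, t / (1 - s * t) ∂μ := by
  have hmaps : Set.MapsTo (fun z => (c⁻¹ : ℝ) * slitMap z) (ball 0 1) (doubleSlitPlane c⁻¹) := by
    intro z hz hw
    rw [im_ofReal_mul, mul_eq_zero_iff_left (inv_pos.2 hc).ne'] at hw
    rw [re_ofReal_mul, abs_mul, abs_of_pos (inv_pos.2 hc)]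
    exact mul_lt_of_lt_one_right (inv_pos.2 hc) (slitMap_mem_doubleSlitPlane hz hw)
  have hf : IsTypicallyReal fun z => F ((c⁻¹ : ℝ) * slitMap z) := by
    refine ⟨hF.comp (differentiableOn_slitMap.const_mul _) hmaps, fun z hz => ?_⟩
    have hA := mul_pos (inv_pos.2 hc) (slitMap_im_coeff_pos hz)
    have hw := him _ (hmaps hz)
    rw [im_ofReal_mul, slitMap_im, ← mul_assoc c⁻¹, mul_left_comm] at hw
    exact nonneg_of_mul_nonneg_right hw hA
  obtain ⟨μ, hμ⟩ := hf.exists_finiteMeasure_re_eq_integral (by simp [slitMap, h0])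
  have hs : ∀ ζ : sphere (0 : ℂ) 1, |(ζ : ℂ).re| ≤ 1 := fun ζ =>
    (abs_re_le_norm _).trans (mem_sphere_zero_iff_norm.1 ζ.2).le
  let φ : sphere (0 : ℂ) 1 → ℝ := fun ζ => c * (ζ : ℂ).re
  have hφ : Measurable φ := by fun_prop
  refine ⟨(c / 2).toNNReal • (μ : Measure (sphere (0 : ℂ) 1)).map φ, inferInstance, ?_,
    fun t ht => ?_⟩
  · have : φ ⁻¹' (Set.Icc (-c) c)ᶜ = ∅ := by
      refine Set.eq_empty_of_forall_notMem fun ζ hζ => hζ ?_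
      rw [Set.mem_Icc, ← abs_le, abs_mul, abs_of_pos hc]
      exact mul_le_of_le_one_right hc.le (hs ζ)
    rw [Measure.smul_apply, Measure.map_apply hφ measurableSet_Icc.compl, this, measure_empty,
      smul_zero]
  obtain ⟨z, hz, hzt⟩ := exists_two_mul_div_one_add_sq_eq (t := c * t) (by
    rwa [abs_mul, abs_of_pos hc, ← lt_inv_mul_iff₀ hc, mul_one])
  have hw : (c⁻¹ : ℝ) * slitMap z = t := by
    rw [slitMap_ofReal, hzt, ← ofReal_mul, inv_mul_cancel_left₀ hc.ne']
  rw [← hw, hμ z hz, integral_smul_nnreal_measure, integral_map hφ.aemeasurable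
    (Measurable.aestronglyMeasurable (by fun_prop)), NNReal.smul_def,
    Real.coe_toNNReal _ (by positivity), smul_eq_mul, ← integral_const_mul]
  congr 1 with ζ
  exact div_one_sub_add_sq_eq hz (hs ζ) hzt

end DoubleSlitPlane

section Moments

open Topology

lemma iteratedDeriv_zero_of_eventually_hasSum {F : ℝ → ℝ} {a : ℕ → ℝ}
    (h : ∀ᶠ t in 𝓝 0, HasSum (fun n => t ^ n * a n) (F t)) (n : ℕ) :
    iteratedDeriv n F 0 = n.factorial * a n := by
  have hF : HasFPowerSeriesAt F (FormalMultilinearSeries.ofScalars ℝ a) 0 := by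
    rw [hasFPowerSeriesAt_iff]
    filter_upwards [h] with t ht
    simpa [FormalMultilinearSeries.coeff_ofScalars] using ht
  have hcoeff := congrArg (fun p => FormalMultilinearSeries.coeff p n)
    (hF.eq_formalMultilinearSeries hF.analyticAt.hasFPowerSeriesAt)
  simp only [FormalMultilinearSeries.coeff_ofScalars] at hcoeff
  rw [hcoeff]
  field_simp

lemma hasSum_pow_succ_mul_integral_pow {μ : Measure ℝ} [IsFiniteMeasure μ] {c t : ℝ}
    (hμ : μ (Set.Icc (-c) c)ᶜ = 0) (ht : |c * t| < 1) :
    HasSum (fun n : ℕ => t ^ (n + 1) * ∫ s, s ^ n ∂μ) (∫ s, t / (1 - s * t) ∂μ) := by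
  have hs : ∀ᵐ s ∂μ, |s * t| ≤ |c * t| := by
    filter_upwards [mem_ae_iff.2 hμ] with s hs
    rw [abs_mul, abs_mul]
    exact mul_le_mul_of_nonneg_right ((abs_le.2 hs).trans (le_abs_self c)) (abs_nonneg t)
  have hterm : ∀ n : ℕ, t ^ (n + 1) * ∫ s, s ^ n ∂μ = ∫ s, t * (s * t) ^ n ∂μ := fun n => by
    rw [← integral_const_mul]
    congr 1 with s
    ring
  simp only [hterm, div_eq_mul_inv]
  refine hasSum_integral_of_dominated_convergence (fun n _ => |t| * |c * t| ^ n)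
    (fun n => (Continuous.aestronglyMeasurable (by fun_prop)))
    (fun n => hs.mono fun s hs => ?_)
    (.of_forall fun _ => (summable_geometric_of_lt_one (abs_nonneg _) ht).mul_left _)
    (integrable_const _)
    (hs.mono fun s hs => (hasSum_geometric_of_abs_lt_one (hs.trans_lt ht)).mul_left _)
  rw [norm_mul, norm_pow, Real.norm_eq_abs, Real.norm_eq_abs]
  gcongr

theorem iteratedDeriv_zero_eq_factorial_mul_integral_pow {μ : Measure ℝ} [IsFiniteMeasure μ]
    {F : ℝ → ℝ} {c : ℝ} (hμ : μ (Set.Icc (-c) c)ᶜ = 0)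
    (hF : ∀ᶠ t in 𝓝 0, F t = ∫ s, t / (1 - s * t) ∂μ) {n : ℕ} (hn : 1 ≤ n) :
    iteratedDeriv n F 0 = n.factorial * ∫ s, s ^ (n - 1) ∂μ := by
  have hsmall : ∀ᶠ t : ℝ in 𝓝 0, |c * t| < 1 :=
    (Continuous.tendsto' (by fun_prop) 0 0 (by simp)).eventually_lt_const zero_lt_one
  have hsum : ∀ᶠ t in 𝓝 0,
      HasSum (fun n => t ^ n * if n = 0 then 0 else ∫ s, s ^ (n - 1) ∂μ) (F t) := by
    filter_upwards [hF, hsmall] with t htF ht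
    rw [htF, ← hasSum_nat_add_iff' 1]
    simpa using hasSum_pow_succ_mul_integral_pow hμ ht
  rw [iteratedDeriv_zero_of_eventually_hasSum hsum, if_neg (by lia)]

end Moments

section LinearODE

/-- The Wronskian of two real functions. -/
def wronskian (f g : ℝ → ℝ) (t : ℝ) : ℝ := f t * deriv g t - deriv f t * g t

variable {θ f₁ f₂ u v : ℝ → ℝ} {x : ℝ}

lemma IsSolution.hasDerivAt (hu : IsSolution θ u) (t : ℝ) : HasDerivAt u (deriv u t) t :=
  (hu.1.differentiable (by simp) t).hasDerivAt

lemma IsSolution.hasDerivAt_deriv (hu : IsSolution θ u) (t : ℝ) :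
    HasDerivAt (deriv u) (-(θ t * u t)) t := by
  rw [← eq_neg_of_add_eq_zero_left (hu.2 t)]
  exact ((contDiff_infty_iff_deriv.1 hu.1).2.differentiable (by simp) t).hasDerivAt

lemma IsSolution.wronskian_eq (hu : IsSolution θ u) (hv : IsSolution θ v) (s t : ℝ) :
    wronskian u v s = wronskian u v t := by
  have hd : ∀ y, HasDerivAt (wronskian u v) 0 y := fun y =>
    (((hu.hasDerivAt y).mul (hv.hasDerivAt_deriv y)).sub
      ((hu.hasDerivAt_deriv y).mul (hv.hasDerivAt y))).congr_deriv (by ring)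
  exact is_const_of_deriv_eq_zero (fun y => (hd y).differentiableAt) (fun y => (hd y).deriv) s t

lemma IsSolution.eq_linear_combination (h₁ : IsSolution θ f₁) (h₂ : IsSolution θ f₂)
    (hW : wronskian f₁ f₂ 0 ≠ 0) (hu : IsSolution θ u) (t : ℝ) :
    u t = wronskian f₁ u 0 / wronskian f₁ f₂ 0 * f₂ t +
      wronskian u f₂ 0 / wronskian f₁ f₂ 0 * f₁ t := by
  field_simp
  rw [h₁.wronskian_eq h₂ 0 t, h₁.wronskian_eq hu 0 t, hu.wronskian_eq h₂ 0 t]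
  simp only [wronskian]
  ring

lemma IsSolution.exists_linear_combination (h₁ : IsSolution θ f₁) (h₂ : IsSolution θ f₂)
    (hW : wronskian f₁ f₂ 0 ≠ 0) (hu : IsSolution θ u) (hv : IsSolution θ v) :
    ∃ a b p q : ℝ, (∀ t, v t = a * f₂ t + b * f₁ t) ∧ (∀ t, u t = p * f₂ t + q * f₁ t) ∧
      (a * q - b * p) * wronskian f₁ f₂ 0 = wronskian u v 0 := by
  refine ⟨_, _, _, _, h₁.eq_linear_combination h₂ hW hv, h₁.eq_linear_combination h₂ hW hu, ?_⟩
  field_simp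
  simp only [wronskian]
  ring

lemma IsFundPair.wronskian_eq_one (h : IsFundPair θ x u v) (t : ℝ) : wronskian u v t = 1 := by
  obtain ⟨hu, hv, hux, hux', hvx, hvx'⟩ := h
  rw [hu.wronskian_eq hv t x, wronskian, hux, hux', hvx, hvx']
  norm_num

lemma IsSolution.comp_reflection (hu : IsSolution θ u) (x : ℝ) :
    IsSolution (fun t => θ (2 * x - t)) fun t => u (2 * x - t) := by
  have hderiv : deriv (fun t => u (2 * x - t)) = fun t => -deriv u (2 * x - t) :=
    funext fun t => deriv_comp_const_sub _ _ _
  refine ⟨hu.1.comp (by fun_prop), fun t => ?_⟩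
  rw [hderiv, deriv.fun_neg, deriv_comp_const_sub, neg_neg]
  exact hu.2 _

end LinearODE

section Sturm

open Real Set

lemma mul_cos_le_of_deriv_deriv_ge {u u' u'' : ℝ → ℝ} {k x s : ℝ} (hk : 0 ≤ k) (hxs : x ≤ s)
    (hks : k * (s - x) < π / 2) (hu : ∀ t ∈ Icc x s, HasDerivAt u (u' t) t)
    (hu' : ∀ t ∈ Icc x s, HasDerivAt u' (u'' t) t) (hx : u' x = 0)
    (hge : ∀ t ∈ Icc x s, -(k ^ 2 * u t) ≤ u'' t) : u x * cos (k * (s - x)) ≤ u s := by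
  have hlin : ∀ t, HasDerivAt (fun t => k * (t - x)) k t := fun t => by
    simpa using ((hasDerivAt_id t).sub_const x).const_mul k
  have hcos : ∀ t ∈ Icc x s, 0 < cos (k * (t - x)) := fun t ht => by
    have h1 : k * (t - x) ≤ k * (s - x) := by gcongr; exact ht.2
    have h2 : 0 ≤ k * (t - x) := mul_nonneg hk (by linarith [ht.1])
    exact cos_pos_of_mem_Ioo ⟨by linarith [pi_pos], by linarith⟩
  have hnum : ∀ t ∈ Icc x s,
      HasDerivAt (fun t => u' t * cos (k * (t - x)) + u t * (k * sin (k * (t - x))))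
        ((u'' t + k ^ 2 * u t) * cos (k * (t - x))) t := fun t ht =>
    (((hu' t ht).mul (hlin t).cos).add ((hu t ht).mul ((hlin t).sin.const_mul k))).congr_deriv
      (by ring)
  have hnum_mono := monotoneOn_of_hasDerivWithinAt_nonneg (convex_Icc x s)
    (fun t ht => (hnum t ht).continuousAt.continuousWithinAt)
    (fun t ht => (hnum t (interior_subset ht)).hasDerivWithinAt) fun t ht =>
      mul_nonneg (by linarith [hge t (interior_subset ht)]) (hcos t (interior_subset ht)).le
  have hquot : ∀ t ∈ Icc x s, HasDerivAt (fun t => u t / cos (k * (t - x)))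
      ((u' t * cos (k * (t - x)) + u t * (k * sin (k * (t - x)))) / cos (k * (t - x)) ^ 2) t :=
    fun t ht => ((hu t ht).div (hlin t).cos (hcos t ht).ne').congr_deriv (by ring)
  have hquot_mono := monotoneOn_of_hasDerivWithinAt_nonneg (convex_Icc x s)
    (fun t ht => (hquot t ht).continuousAt.continuousWithinAt)
    (fun t ht => (hquot t (interior_subset ht)).hasDerivWithinAt) fun t ht => by
      have ht := interior_subset ht
      refine div_nonneg ?_ (sq_nonneg _)
      simpa [hx] using hnum_mono (left_mem_Icc.2 hxs) ht ht.1
  have hle := hquot_mono (left_mem_Icc.2 hxs) (right_mem_Icc.2 hxs) hxs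
  simpa using (le_div_iff₀ (hcos s (right_mem_Icc.2 hxs))).1 hle

lemma exists_eq_zero_and_nonneg_of_pos {u : ℝ → ℝ} {x t : ℝ} (hu : ContinuousOn u (Icc x t))
    (hxt : x ≤ t) (hx : 0 < u x) (ht : u t = 0) :
    ∃ s ∈ Icc x t, u s = 0 ∧ ∀ y ∈ Icc x s, 0 ≤ u y := by
  obtain ⟨s, ⟨hs, hus⟩, hmin⟩ := (isCompact_Icc.of_isClosed_subset
    (hu.preimage_isClosed_of_isClosed isClosed_Icc (isClosed_singleton (x := 0)))
    inter_subset_left).exists_isLeast ⟨t, right_mem_Icc.2 hxt, ht⟩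
  refine ⟨s, hs, hus, fun y hy => ?_⟩
  by_contra! hneg
  obtain ⟨z, hz, hz0⟩ := intermediate_value_Icc' hy.1
    (hu.mono (Icc_subset_Icc_right (hy.2.trans hs.2))) ⟨hneg.le, hx.le⟩
  have hsz : s ≤ z := hmin ⟨⟨hz.1, hz.2.trans (hy.2.trans hs.2)⟩, hz0⟩
  have hys : y = s := le_antisymm hy.2 (hsz.trans hz.2)
  exact hneg.ne (hys ▸ hus)

variable {θ u : ℝ → ℝ} {K x t : ℝ}

lemma IsSolution.ne_zero_of_le (hu : IsSolution θ u) (hK : 0 < K)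
    (hθ : ∀ y ∈ Icc x t, θ y ≤ K) (hx : 0 < u x) (hx' : deriv u x = 0) (hxt : x ≤ t)
    (ht : t - x < π / (2 * √K)) : u t ≠ 0 := by
  intro hut
  obtain ⟨s, hs, hus, hnonneg⟩ := exists_eq_zero_and_nonneg_of_pos
    (fun y _ => (hu.hasDerivAt y).continuousAt.continuousWithinAt) hxt hx hut
  have hks : √K * (s - x) < π / 2 := by
    have h1 : s - x < π / (2 * √K) := by linarith [hs.2]
    rw [lt_div_iff₀ (by positivity)] at h1
    linarith
  have hle := mul_cos_le_of_deriv_deriv_ge (sqrt_nonneg K) hs.1 hks (fun y _ => hu.hasDerivAt y)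
    (fun y _ => hu.hasDerivAt_deriv y) hx' fun y hy => by
      rw [sq_sqrt hK.le, neg_le_neg_iff]
      exact mul_le_mul_of_nonneg_right (hθ y ⟨hy.1, hy.2.trans hs.2⟩) (hnonneg y hy)
  have hcos : 0 < cos (√K * (s - x)) := by
    have h0 : 0 ≤ √K * (s - x) := mul_nonneg (sqrt_nonneg K) (by linarith [hs.1])
    exact cos_pos_of_mem_Ioo ⟨by linarith [pi_pos], hks⟩
  rw [hus] at hle
  exact absurd (mul_pos hx hcos) hle.not_gt

lemma IsSolution.ne_zero_of_abs_sub_lt (hu : IsSolution θ u) (hK : 0 < K)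
    (hθ : ∀ y, |y - x| < π / (2 * √K) → θ y ≤ K) (hx : 0 < u x) (hx' : deriv u x = 0)
    (ht : |t - x| < π / (2 * √K)) : u t ≠ 0 := by
  obtain ⟨ht1, ht2⟩ := abs_lt.1 ht
  rcases le_total x t with hxt | htx
  · refine hu.ne_zero_of_le hK (fun y hy => hθ y (abs_lt.2 ?_)) hx hx' hxt ht2
    constructor <;> linarith [hy.1, hy.2]
  · have hrefl : 2 * x - x = x := by ring
    have hne := (hu.comp_reflection x).ne_zero_of_le (x := x) (t := 2 * x - t) hK
      (fun y hy => hθ _ (abs_lt.2 (by constructor <;> linarith [hy.1, hy.2]))) (by rwa [hrefl])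
      (by rw [deriv_comp_const_sub, hrefl, hx', neg_zero]) (by linarith) (by linarith)
    simpa using hne

end Sturm

section StripExtension

open Complex Topology

/-- The strip `|Im z| < R` without the real zeros of `f`, the natural domain of a meromorphic
quotient `g / f` on that strip. -/
def zeroFreeStrip (R : ℝ) (f : ℝ → ℝ) : Set ℂ := {z | |z.im| < R ∧ (z.im = 0 → f z.re ≠ 0)}

/-- The strip `|Im z| < R` slit along the real points at distance at least `δ` from `x`. -/
def slitStrip (R x δ : ℝ) : Set ℂ := {z | |z.im| < R ∧ (z.im = 0 → |z.re - x| < δ)}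

/-- `H` extends the real quotient `g / f` holomorphically to the strip `|Im z| < R` without the
real zeros of `f`; nothing is required at those zeros. -/
structure IsStripExtension (R : ℝ) (f g : ℝ → ℝ) (H : ℂ → ℂ) : Prop where
  apply_ofReal : ∀ t : ℝ, f t ≠ 0 → H t = (g t / f t : ℝ)
  differentiableOn : DifferentiableOn ℂ H (zeroFreeStrip R f)

variable {R x δ : ℝ} {f g : ℝ → ℝ} {H : ℂ → ℂ}

lemma isOpen_zeroFreeStrip (hf : Continuous f) : IsOpen (zeroFreeStrip R f) := by
  have hset : zeroFreeStrip R f = {z | |z.im| < R} ∩ ({z | z.im ≠ 0} ∪ {z | f z.re ≠ 0}) := by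
    ext z
    exact and_congr_right fun _ => imp_iff_not_or
  rw [hset]
  exact (isOpen_lt (by fun_prop) continuous_const).inter
    ((isOpen_ne_fun continuous_im continuous_const).union
      (isOpen_ne_fun (hf.comp continuous_re) continuous_const))

lemma isOpen_slitStrip : IsOpen (slitStrip R x δ) := by
  have hset : slitStrip R x δ = {z | |z.im| < R} ∩ ({z | z.im ≠ 0} ∪ {z | |z.re - x| < δ}) := by
    ext z
    exact and_congr_right fun _ => imp_iff_not_or
  rw [hset]
  exact (isOpen_lt (by fun_prop) continuous_const).inter
    ((isOpen_ne_fun continuous_im continuous_const).union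
      (isOpen_lt (by fun_prop) continuous_const))

lemma starConvex_slitStrip (hδ : 0 < δ) : StarConvex ℝ (x : ℂ) (slitStrip R x δ) := by
  rintro z ⟨hz, hz'⟩ a b ha hb hab
  have hb1 : b ≤ 1 := by linarith
  have him : (a • (x : ℂ) + b • z).im = b * z.im := by simp
  have hre : (a • (x : ℂ) + b • z).re - x = b * (z.re - x) := by
    simp only [add_re, real_smul, re_ofReal_mul, ofReal_re]
    linear_combination x * hab
  refine ⟨?_, fun h0 => ?_⟩
  · rw [him, abs_mul, abs_of_nonneg hb]
    exact (mul_le_of_le_one_left (abs_nonneg _) hb1).trans_lt hz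
  · rw [hre, abs_mul, abs_of_nonneg hb]
    rcases mul_eq_zero.1 (him ▸ h0) with rfl | h
    · rwa [zero_mul]
    · exact (mul_le_of_le_one_left (abs_nonneg _) hb1).trans_lt (hz' h)

lemma slitStrip_subset_zeroFreeStrip (hf : ∀ t, |t - x| < δ → f t ≠ 0) :
    slitStrip R x δ ⊆ zeroFreeStrip R f := fun _ hz => ⟨hz.1, fun h => hf _ (hz.2 h)⟩

lemma map_conj_eq_conj_map {D : Set ℂ} (hD : IsOpen D) (hD' : IsPreconnected D)
    (hconj : ∀ z ∈ D, (starRingEnd ℂ) z ∈ D) (hH : DifferentiableOn ℂ H D) {t₀ : ℝ}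
    (ht₀ : (t₀ : ℂ) ∈ D) (hreal : ∀ᶠ t : ℝ in 𝓝[≠] t₀, (H t).im = 0) {z : ℂ} (hz : z ∈ D) :
    H ((starRingEnd ℂ) z) = (starRingEnd ℂ) (H z) := by
  have hconjH : DifferentiableOn ℂ (starRingEnd ℂ ∘ H ∘ starRingEnd ℂ) D := fun w hw => by
    have h := (hH.differentiableAt (hD.mem_nhds (hconj w hw))).conj_conj
    rw [conj_conj] at h
    exact h.differentiableWithinAt
  have hfreq : ∃ᶠ w in 𝓝[≠] (t₀ : ℂ), H w = (starRingEnd ℂ ∘ H ∘ starRingEnd ℂ) w := by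
    have hcoe : Tendsto ofReal (𝓝[≠] t₀) (𝓝[≠] (t₀ : ℂ)) :=
      continuous_ofReal.continuousAt.continuousWithinAt.tendsto_nhdsWithin fun s hs => by
        simpa using hs
    refine hcoe.frequently (Eventually.frequently (hreal.mono fun t ht => ?_))
    simp only [Function.comp_apply, conj_ofReal]
    exact (conj_eq_iff_im.2 ht).symm
  have heq := (hH.analyticOnNhd hD).eqOn_of_preconnected_of_frequently_eq
    (hconjH.analyticOnNhd hD) hD' ht₀ hfreq hz
  rw [heq, Function.comp_apply, Function.comp_apply, conj_conj]

lemma IsStripExtension.map_conj (hH : IsStripExtension R f g H) (hf : Continuous f)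
    (hfx : f x ≠ 0) {z : ℂ} (hz : |z.im| < R) (hz0 : z.im ≠ 0) :
    H ((starRingEnd ℂ) z) = (starRingEnd ℂ) (H z) := by
  obtain ⟨δ, hδ, hball⟩ := Metric.eventually_nhds_iff.1 (hf.continuousAt.eventually_ne hfx)
  have hxmem : (x : ℂ) ∈ slitStrip R x δ :=
    ⟨by simpa using (abs_nonneg _).trans_lt hz, fun _ => by simpa using hδ⟩
  have hreal : ∀ᶠ t : ℝ in 𝓝[≠] x, (H t).im = 0 := by
    filter_upwards [(hf.continuousAt.eventually_ne hfx).filter_mono nhdsWithin_le_nhds] with t ht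
    rw [hH.apply_ofReal t ht, ofReal_im]
  exact map_conj_eq_conj_map isOpen_slitStrip
    ((starConvex_slitStrip hδ).isPathConnected hxmem).isConnected.isPreconnected
    (fun w hw => ⟨by simpa using hw.1, by simpa using hw.2⟩)
    (hH.differentiableOn.mono (slitStrip_subset_zeroFreeStrip fun t ht => hball ht)) hxmem hreal
    ⟨hz, fun h => absurd h hz0⟩

lemma eventually_mem_zeroFreeStrip (hR : 0 < R) {s : ℝ} (hs : ∀ᶠ t in 𝓝[≠] s, f t ≠ 0) :
    ∀ᶠ z in 𝓝[≠] (s : ℂ), z ∈ zeroFreeStrip R f := by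
  have him : ∀ᶠ z : ℂ in 𝓝 (s : ℂ), |z.im| < R :=
    (isOpen_lt (by fun_prop) continuous_const : IsOpen {z : ℂ | |z.im| < R}).mem_nhds (by simpa)
  rw [eventually_nhdsWithin_iff] at hs ⊢
  filter_upwards [him, (continuous_re.tendsto (s : ℂ)).eventually hs] with z hz hzre hne
  exact ⟨hz, fun h0 => hzre fun h => hne (Complex.ext h (by simpa using h0))⟩

end StripExtension

section Mobius

open Complex Topology Bornology

lemma tendsto_mobius_cobounded {a b p q : ℂ} (hp : p ≠ 0) :
    Tendsto (fun w => (a * w + b) / (p * w + q)) (cobounded ℂ) (𝓝 (a / p)) := by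
  have hinv : Tendsto (fun w : ℂ => (a + b * w⁻¹) / (p + q * w⁻¹)) (cobounded ℂ)
      (𝓝 ((a + b * 0) / (p + q * 0))) :=
    ((tendsto_inv₀_cobounded.const_mul b).const_add a).div
      ((tendsto_inv₀_cobounded.const_mul q).const_add p) (by simpa using hp)
  rw [mul_zero, mul_zero, add_zero, add_zero] at hinv
  refine hinv.congr' ((eventually_ne_cobounded 0).mono fun w hw => ?_)
  rw [← mul_div_mul_right (a + b * w⁻¹) _ hw]
  field_simp

variable {a b p q : ℝ}

lemma mobius_denom_ne_zero_of_im_ne_zero (hdet : a * q - b * p ≠ 0) {w : ℂ} (hw : w.im ≠ 0) :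
    (p * w + q : ℂ) ≠ 0 := by
  intro h
  have hp : p = 0 := by simpa [hw] using congrArg im h
  have hq : q = 0 := by simpa [hp] using congrArg re h
  simp [hp, hq] at hdet

lemma im_mobius (w : ℂ) :
    ((a * w + b) / (p * w + q) : ℂ).im = (a * q - b * p) * w.im / normSq (p * w + q) := by
  rw [div_im]
  simp
  ring

variable {R : ℝ} {f g u v : ℝ → ℝ} {H : ℂ → ℂ}

/-- The Möbius transform of `H`, with the real axis filled in by the quotient `v / u`. -/
def mobiusExtension (a b p q : ℝ) (u v : ℝ → ℝ) (H : ℂ → ℂ) (z : ℂ) : ℂ :=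
  if z.im = 0 then (v z.re / u z.re : ℝ) else (a * H z + b) / (p * H z + q)

lemma mobiusExtension_ofReal (t : ℝ) : mobiusExtension a b p q u v H t = (v t / u t : ℝ) := by
  simp [mobiusExtension]

lemma IsStripExtension.mobiusExtension_eq (hH : IsStripExtension R f g H)
    (hu : ∀ t, u t = p * g t + q * f t) (hv : ∀ t, v t = a * g t + b * f t) {z : ℂ}
    (hz : z ∈ zeroFreeStrip R f) :
    mobiusExtension a b p q u v H z = (a * H z + b) / (p * H z + q) := by
  by_cases h0 : z.im = 0
  · obtain ⟨t, rfl⟩ : ∃ t : ℝ, z = t := ⟨z.re, Complex.ext rfl h0⟩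
    have ht : f t ≠ 0 := hz.2 h0
    rw [mobiusExtension_ofReal, hH.apply_ofReal t ht, hu, hv,
      ← mul_div_mul_right _ _ (inv_ne_zero ht)]
    norm_cast
    field_simp
  · exact if_neg h0

lemma IsStripExtension.mobius_denom_ne_zero (hH : IsStripExtension R f g H)
    (hu : ∀ t, u t = p * g t + q * f t) (hdet : a * q - b * p ≠ 0)
    (him : ∀ z, |z.im| < R → z.im ≠ 0 → (H z).im ≠ 0) {z : ℂ} (hz : z ∈ zeroFreeStrip R f)
    (hzu : z ∈ zeroFreeStrip R u) : (p * H z + q : ℂ) ≠ 0 := by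
  by_cases h0 : z.im = 0
  · obtain ⟨t, rfl⟩ : ∃ t : ℝ, z = t := ⟨z.re, Complex.ext rfl h0⟩
    have ht : f t ≠ 0 := hz.2 h0
    have hut : u t ≠ 0 := hzu.2 h0
    have hdenom : p * (g t / f t) + q = u t / f t := by
      rw [hu]
      field_simp
    rw [hH.apply_ofReal t ht]
    exact mod_cast hdenom.trans_ne (div_ne_zero hut ht)
  · exact mobius_denom_ne_zero_of_im_ne_zero hdet (him z hz.1 h0)

lemma IsStripExtension.continuousAt_mobiusExtension (hH : IsStripExtension R f g H)
    (hu : ∀ t, u t = p * g t + q * f t) (hv : ∀ t, v t = a * g t + b * f t) {s : ℝ}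
    (hs : f s = 0) (hus : u s ≠ 0) (hpole : Tendsto H (𝓝[≠] (s : ℂ)) (cobounded ℂ))
    (hiso : ∀ᶠ z in 𝓝[≠] (s : ℂ), z ∈ zeroFreeStrip R f) :
    ContinuousAt (mobiusExtension a b p q u v H) s := by
  have hp : p ≠ 0 := fun h => hus (by rw [hu, hs, h]; ring)
  have hg : g s ≠ 0 := fun h => hus (by rw [hu, hs, h]; ring)
  have hval : mobiusExtension a b p q u v H s = a / p := by
    rw [mobiusExtension_ofReal, hu, hv, hs, mul_zero, mul_zero, add_zero, add_zero,
      mul_div_mul_right _ _ hg, ofReal_div]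
  rw [continuousAt_iff_punctured_nhds, hval]
  exact ((tendsto_mobius_cobounded (ofReal_ne_zero.2 hp)).comp hpole).congr'
    (hiso.mono fun z hz => (hH.mobiusExtension_eq hu hv hz).symm)

lemma IsStripExtension.mobius (hH : IsStripExtension R f g H) (hf : Continuous f)
    (hg : Continuous g) (hu : ∀ t, u t = p * g t + q * f t) (hv : ∀ t, v t = a * g t + b * f t)
    (hdet : a * q - b * p ≠ 0) (him : ∀ z, |z.im| < R → z.im ≠ 0 → (H z).im ≠ 0)
    (hiso : ∀ s, f s = 0 → ∀ᶠ t in 𝓝[≠] s, f t ≠ 0)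
    (hpole : ∀ s : ℝ, f s = 0 → Tendsto H (𝓝[≠] (s : ℂ)) (cobounded ℂ)) :
    IsStripExtension R u v (mobiusExtension a b p q u v H) := by
  refine ⟨fun t _ => mobiusExtension_ofReal t, fun z hz => ?_⟩
  have huc : Continuous u := by
    rw [funext hu]
    fun_prop
  have hregular : ∀ w ∈ zeroFreeStrip R f ∩ zeroFreeStrip R u,
      DifferentiableAt ℂ (mobiusExtension a b p q u v H) w := fun w hw => by
    have hHw := hH.differentiableOn.differentiableAt ((isOpen_zeroFreeStrip hf).mem_nhds hw.1)
    have heq : mobiusExtension a b p q u v H =ᶠ[𝓝 w] fun z => (a * H z + b) / (p * H z + q) :=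
      mem_of_superset ((isOpen_zeroFreeStrip hf).mem_nhds hw.1)
        fun z hz => hH.mobiusExtension_eq hu hv hz
    exact heq.differentiableAt_iff.2 (((hHw.const_mul _).add_const _).div
      ((hHw.const_mul _).add_const _) (hH.mobius_denom_ne_zero hu hdet him hw.1 hw.2))
  refine DifferentiableAt.differentiableWithinAt ?_
  by_cases hzf : z ∈ zeroFreeStrip R f
  · exact hregular z ⟨hzf, hz⟩
  obtain ⟨h0, hfz⟩ : z.im = 0 ∧ f z.re = 0 := by simpa [zeroFreeStrip, hz.1] using hzf
  obtain ⟨s, rfl⟩ : ∃ s : ℝ, z = s := ⟨z.re, Complex.ext rfl h0⟩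
  -- At a pole of `H` the transform stays continuous, so the singularity is removable.
  have hnear := eventually_mem_zeroFreeStrip ((abs_nonneg _).trans_lt hz.1) (hiso s hfz)
  refine (analyticAt_of_differentiable_on_punctured_nhds_of_continuousAt ?_
    (hH.continuousAt_mobiusExtension hu hv hfz (hz.2 h0) (hpole s hfz) hnear)).differentiableAt
  filter_upwards [hnear, ((isOpen_zeroFreeStrip huc).eventually_mem hz).filter_mono
    nhdsWithin_le_nhds] with w hwf hwu using hregular w ⟨hwf, hwu⟩

end Mobius

section HypR

open Complex Topology Bornology

variable {θ f₁ f₂ : ℝ → ℝ} {R : ℝ}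

lemma IsSolution.eventually_ne_zero (h₁ : IsSolution θ f₁) (hW : ∀ t, wronskian f₁ f₂ t ≠ 0)
    {s : ℝ} (hs : f₁ s = 0) : ∀ᶠ t in 𝓝[≠] s, f₁ t ≠ 0 :=
  (h₁.hasDerivAt s).eventually_ne fun h => hW s (by simp [wronskian, h, hs])

lemma exists_ne_zero_of_wronskian_ne_zero (hW : wronskian f₁ f₂ 0 ≠ 0) : ∃ t, f₁ t ≠ 0 := by
  by_contra! h
  obtain rfl : f₁ = 0 := funext h
  simp [wronskian] at hW

lemma IsStripExtension.mul_im_mul_im_pos {H : ℂ → ℂ} (hH : IsStripExtension R f₁ f₂ H)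
    (hc : Continuous f₁) {s : ℝ} (hs : f₁ s ≠ 0) {a : ℝ}
    (hpos : ∀ z : ℂ, 0 < z.im → z.im < R → 0 < a * (H z).im * z.im) {z : ℂ} (hz : |z.im| < R)
    (h0 : z.im ≠ 0) : 0 < a * (H z).im * z.im := by
  rcases h0.lt_or_gt with hneg | hpos'
  · have h := hpos ((starRingEnd ℂ) z) (by simpa using hneg) (by rwa [conj_im, ← abs_of_neg hneg])
    rwa [hH.map_conj hc hs hz h0, conj_im, conj_im, mul_neg, mul_neg, neg_mul, neg_neg] at h
  · exact hpos z hpos' (by rwa [← abs_of_pos hpos'])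

theorem HypR.exists_isStripExtension (hHyp : HypR θ R) {x : ℝ} {u v : ℝ → ℝ}
    (hF : IsFundPair θ x u v) :
    ∃ G, IsStripExtension R u v G ∧ ∀ z, |z.im| < R → z.im ≠ 0 → 0 < (G z).im * z.im := by
  obtain ⟨f₁, f₂, H, h₁, h₂, hW, hreal, hdiff, hpole, hpos⟩ := hHyp
  change wronskian f₁ f₂ 0 ≠ 0 at hW
  obtain ⟨a, b, p, q, hv, hu, hdet⟩ := h₁.exists_linear_combination h₂ hW hF.1 hF.2.1
  rw [hF.wronskian_eq_one] at hdet
  have hdet0 : a * q - b * p ≠ 0 := left_ne_zero_of_mul (hdet.trans_ne one_ne_zero)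
  have hc₁ : Continuous f₁ := h₁.1.continuous
  have hH : IsStripExtension R f₁ f₂ H := by
    refine ⟨hreal, hdiff.mono fun z hz => ⟨hz.1, ?_⟩⟩
    rintro t ht rfl
    exact hz.2 (ofReal_im t) ht
  obtain ⟨t₀, ht₀⟩ := exists_ne_zero_of_wronskian_ne_zero hW
  have hsign : ∀ z, |z.im| < R → z.im ≠ 0 → 0 < wronskian f₁ f₂ 0 * (H z).im * z.im := fun z =>
    hH.mul_im_mul_im_pos hc₁ ht₀ hpos
  have him : ∀ z, |z.im| < R → z.im ≠ 0 → (H z).im ≠ 0 := fun z hz h0 h =>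
    (hsign z hz h0).ne' (by rw [h, mul_zero, zero_mul])
  refine ⟨_, hH.mobius hc₁ h₂.1.continuous hu hv hdet0 him (fun s hs => h₁.eventually_ne_zero
    (fun t => h₁.wronskian_eq h₂ 0 t ▸ hW) hs)
    (fun s hs => tendsto_norm_atTop_iff_cobounded.1 (hpole s hs)), fun z hz h0 => ?_⟩
  have hnorm := normSq_pos.2 (mobius_denom_ne_zero_of_im_ne_zero hdet0 (him z hz h0))
  have hdet_sq : (a * q - b * p) * (H z).im * z.im =
      (a * q - b * p) ^ 2 * (wronskian f₁ f₂ 0 * (H z).im * z.im) := by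
    linear_combination -((a * q - b * p) * (H z).im * z.im) * hdet
  rw [mobiusExtension, if_neg h0, im_mobius, div_mul_eq_mul_div, hdet_sq]
  have := hsign z hz h0
  positivity

end HypR

section GMap

open Complex

/-- The holomorphic extension of `gR R` to the complement of `[R / π, ∞)`. -/
def complexGR (R : ℝ) (w : ℂ) : ℂ := -(R / Real.pi : ℝ) * log (1 - (Real.pi / R : ℝ) * w)

variable {R δ : ℝ}

lemma complexGR_im (R : ℝ) (w : ℂ) :
    (complexGR R w).im = -(R / Real.pi) * arg (1 - (Real.pi / R : ℝ) * w) := by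
  rw [complexGR, ← ofReal_neg, im_ofReal_mul, log_im]

lemma complexGR_ofReal {t : ℝ} (ht : 1 - (Real.pi / R : ℝ) * (t : ℂ) ∈ slitPlane) :
    complexGR R t = gR R t := by
  have h : (1 - (Real.pi / R : ℝ) * t : ℂ) = (1 - Real.pi / R * t : ℝ) := by push_cast; rfl
  rw [h, ofReal_mem_slitPlane] at ht
  rw [complexGR, gR, h, ← ofReal_log ht.le]
  push_cast
  rfl

lemma one_sub_mul_mem_slitPlane (hR : 0 < R) {r : ℝ} (hr : r ≤ R / Real.pi) {w : ℂ}
    (hw : w ∈ doubleSlitPlane r) : 1 - (Real.pi / R : ℝ) * w ∈ slitPlane := by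
  rw [mem_slitPlane_iff, or_iff_not_imp_right]
  intro him
  have h0 : w.im = 0 := by simpa [hR.ne', Real.pi_ne_zero] using him
  have hre : w.re < R / Real.pi := (le_abs_self _).trans_lt ((hw h0).trans_le hr)
  rw [lt_div_iff₀ Real.pi_pos] at hre
  rw [sub_re, one_re, re_ofReal_mul, sub_pos, div_mul_eq_mul_div, div_lt_one hR]
  linarith

lemma differentiableAt_complexGR {w : ℂ} (hw : 1 - (Real.pi / R : ℝ) * w ∈ slitPlane) :
    DifferentiableAt ℂ (complexGR R) w := by
  have hlog : DifferentiableAt ℂ (fun w => log (1 - (Real.pi / R : ℝ) * w)) w :=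
    DifferentiableAt.clog (by fun_prop) hw
  exact hlog.const_mul _

lemma arg_mul_im_pos {z : ℂ} (hz : z.im ≠ 0) : 0 < arg z * z.im := by
  have harg : arg z ≠ 0 := fun h => hz (arg_eq_zero_iff.1 h).2
  rcases hz.lt_or_gt with hneg | hpos
  · exact mul_pos_of_neg_of_neg (arg_neg_iff.2 hneg) hneg
  · exact mul_pos ((arg_nonneg_iff.2 hpos.le).lt_of_ne' harg) hpos

lemma complexGR_im_mul_im_pos (hR : 0 < R) {w : ℂ} (hw : w.im ≠ 0) :
    0 < (complexGR R w).im * w.im := by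
  have him : (1 - (Real.pi / R : ℝ) * w).im = -(Real.pi / R) * w.im := by simp
  have harg := arg_mul_im_pos (z := 1 - (Real.pi / R : ℝ) * w)
    (him ▸ mul_ne_zero (neg_ne_zero.2 (by positivity)) hw)
  rw [him] at harg
  have hscale : (complexGR R w).im * w.im =
      (R / Real.pi) ^ 2 * (arg (1 - (Real.pi / R : ℝ) * w) * (-(Real.pi / R) * w.im)) := by
    rw [complexGR_im]
    field_simp
  rw [hscale]
  positivity

lemma abs_complexGR_im_lt (hR : 0 < R) {w : ℂ} (hw : 1 - (Real.pi / R : ℝ) * w ∈ slitPlane) :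
    |(complexGR R w).im| < R := by
  have harg : |arg (1 - (Real.pi / R : ℝ) * w)| < Real.pi :=
    abs_lt.2 ⟨neg_pi_lt_arg _, (arg_le_pi _).lt_of_ne (mem_slitPlane_iff_arg.1 hw).1⟩
  rw [complexGR_im, abs_mul, abs_neg, abs_of_pos (div_pos hR Real.pi_pos), div_mul_eq_mul_div,
    div_lt_iff₀ Real.pi_pos]
  exact mul_lt_mul_of_pos_left harg hR

lemma abs_log_one_sub_lt {a s : ℝ} (hs : |s| < 1 - Real.exp (-a)) : |Real.log (1 - s)| < a := by
  obtain ⟨hlow, hupp⟩ := abs_lt.1 hs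
  have hexp := Real.exp_pos (-a)
  have hpos : 0 < 1 - s := by linarith
  rw [abs_lt, Real.lt_log_iff_exp_lt hpos, Real.log_lt_iff_lt_exp hpos]
  refine ⟨by linarith, ?_⟩
  have hprod : Real.exp a * Real.exp (-a) = 1 := by
    rw [← Real.exp_add, add_neg_cancel, Real.exp_zero]
  nlinarith [sq_nonneg (Real.exp a - 1), Real.exp_pos a]

lemma abs_gR_lt (hR : 0 < R) {t : ℝ}
    (ht : |t| < R * (1 - Real.exp (-(Real.pi * δ / R))) / Real.pi) : |gR R t| < δ := by
  have hs : |Real.pi / R * t| < 1 - Real.exp (-(Real.pi * δ / R)) := by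
    rw [abs_mul, abs_of_pos (div_pos Real.pi_pos hR), div_mul_eq_mul_div, div_lt_iff₀ hR]
    rw [lt_div_iff₀ Real.pi_pos] at ht
    linarith
  have hlog := abs_log_one_sub_lt hs
  rw [gR, abs_mul, abs_neg, abs_of_pos (div_pos hR Real.pi_pos), div_mul_eq_mul_div,
    div_lt_iff₀ Real.pi_pos]
  rw [lt_div_iff₀ hR] at hlog
  linarith

end GMap

section Representation

open Complex

variable {f₁ f₂ : ℝ → ℝ} {G : ℂ → ℂ} {R x δ c r : ℝ}

lemma mul_one_sub_exp_div_pi_le (hR : 0 < R) (a : ℝ) :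
    R * (1 - Real.exp a) / Real.pi ≤ R / Real.pi :=
  div_le_div_of_nonneg_right (mul_le_of_le_one_right hR.le (by linarith [Real.exp_pos a]))
    Real.pi_pos.le

lemma mapsTo_complexGR_slitStrip (hR : 0 < R)
    (hr : r = R * (1 - Real.exp (-(Real.pi * δ / R))) / Real.pi) :
    Set.MapsTo (fun w => x + complexGR R w) (doubleSlitPlane r) (slitStrip R x δ) := by
  intro w hw
  have hslit := one_sub_mul_mem_slitPlane hR (hr.trans_le (mul_one_sub_exp_div_pi_le hR _)) hw
  refine ⟨by simpa using abs_complexGR_im_lt hR hslit, fun him => ?_⟩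
  have h0 : w.im = 0 := by
    by_contra hne
    exact (complexGR_im_mul_im_pos hR hne).ne' (by simp_all)
  obtain ⟨t, rfl⟩ : ∃ t : ℝ, w = t := ⟨w.re, Complex.ext rfl h0⟩
  simpa [complexGR_ofReal hslit] using abs_gR_lt hR (hr ▸ hw h0)

lemma im_comp_complexGR_mul_im_nonneg (hR : 0 < R)
    (hpick : ∀ z, |z.im| < R → z.im ≠ 0 → 0 ≤ (G z).im * z.im) {w : ℂ}
    (hw : 1 - (Real.pi / R : ℝ) * w ∈ slitPlane) :
    0 ≤ (G (x + complexGR R w)).im * w.im := by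
  rcases eq_or_ne w.im 0 with h0 | h0
  · rw [h0, mul_zero]
  have hpos := complexGR_im_mul_im_pos hR h0
  have him : (x + complexGR R w).im = (complexGR R w).im := by simp
  have hG := hpick (x + complexGR R w) (him ▸ abs_complexGR_im_lt hR hw)
    (him ▸ left_ne_zero_of_mul hpos.ne')
  rw [him] at hG
  have hsq : 0 < (complexGR R w).im ^ 2 := sq_pos_of_ne_zero (left_ne_zero_of_mul hpos.ne')
  refine (mul_nonneg_iff_of_pos_left hsq).1 ?_
  calc 0 ≤ ((G (x + complexGR R w)).im * (complexGR R w).im) * ((complexGR R w).im * w.im) :=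
        mul_nonneg hG hpos.le
    _ = _ := by ring

theorem IsStripExtension.exists_finiteMeasure_schR_eq (hG : IsStripExtension R f₁ f₂ G)
    (hpick : ∀ z, |z.im| < R → z.im ≠ 0 → 0 ≤ (G z).im * z.im) (hx : f₂ x = 0)
    (hne : ∀ t, |t - x| < δ → f₁ t ≠ 0) (hR : 0 < R) (hδ : 0 < δ)
    (hc : c = Real.pi / (R * (1 - Real.exp (-(Real.pi * δ / R))))) :
    ∃ μ : Measure ℝ, IsFiniteMeasure μ ∧ μ (Set.Icc (-c) c)ᶜ = 0 ∧
      ∀ n : ℕ, 1 ≤ n → SchR R x f₁ f₂ n = n.factorial * ∫ t, t ^ (n - 1) ∂μ := by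
  have hcpos : 0 < c := by
    rw [hc]
    have hexp : Real.exp (-(Real.pi * δ / R)) < 1 :=
      Real.exp_lt_one_iff.2 (neg_lt_zero.2 (by positivity))
    exact div_pos Real.pi_pos (mul_pos hR (sub_pos.2 hexp))
  have hinv : c⁻¹ = R * (1 - Real.exp (-(Real.pi * δ / R))) / Real.pi := by rw [hc, inv_div]
  have hmaps := mapsTo_complexGR_slitStrip (x := x) hR hinv
  have hslit : ∀ w ∈ doubleSlitPlane c⁻¹, 1 - (Real.pi / R : ℝ) * w ∈ slitPlane := fun w hw =>
    one_sub_mul_mem_slitPlane hR (hinv.trans_le (mul_one_sub_exp_div_pi_le hR _)) hw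
  have hval : ∀ t : ℝ, |t| < c⁻¹ →
      G (x + complexGR R t) = (f₂ (x + gR R t) / f₁ (x + gR R t) : ℝ) := fun t ht => by
    rw [complexGR_ofReal (hslit t fun _ => ht), ← ofReal_add]
    exact hG.apply_ofReal _ (hne _ (by simpa using abs_gR_lt hR (hinv ▸ ht)))
  obtain ⟨μ, hfin, hμ, hF⟩ := exists_finiteMeasure_re_eq_integral_of_doubleSlitPlane hcpos
    (F := fun w => G (x + complexGR R w))
    ((hG.differentiableOn.mono (slitStrip_subset_zeroFreeStrip hne)).comp
      (fun w hw => ((differentiableAt_complexGR (hslit w hw)).const_add _).differentiableWithinAt)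
      hmaps)
    (by simpa [gR, hx] using hval 0 (by simpa))
    (fun w hw => im_comp_complexGR_mul_im_nonneg hR hpick (hslit w hw))
  refine ⟨μ, hfin, hμ, fun n hn => iteratedDeriv_zero_eq_factorial_mul_integral_pow hμ ?_ hn⟩
  filter_upwards [Metric.ball_mem_nhds (0 : ℝ) (inv_pos.2 hcpos)] with t ht
  rw [mem_ball_zero_iff, Real.norm_eq_abs] at ht
  rw [← hF t ht, hval t ht, ofReal_re]

end Representation

theorem stmt5_general {θ : ℝ → ℝ} {R K c x : ℝ} (hR : 0 < R) (hHyp : HypR θ R) (hK : 0 < K)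
    (hθ : ∀ t, |t - x| < Real.pi / (2 * √K) → θ t ≤ K)
    (hc : c = Real.pi / (R * (1 - Real.exp (-(Real.pi ^ 2) / (2 * R * √K)))))
    {f₁ f₂ : ℝ → ℝ} (hF : IsFundPair θ x f₁ f₂) :
    ∃ μ : Measure ℝ, IsFiniteMeasure μ ∧ μ (Set.Icc (-c) c)ᶜ = 0 ∧
      ∀ n : ℕ, 1 ≤ n → SchR R x f₁ f₂ n = (Nat.factorial n : ℝ) * ∫ t : ℝ, t ^ (n - 1) ∂μ := by
  obtain ⟨G, hG, hpick⟩ := hHyp.exists_isStripExtension hF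
  obtain ⟨hf₁, -, hx₁, hx₁', hx₂, -⟩ := hF
  have hne : ∀ t, |t - x| < Real.pi / (2 * √K) → f₁ t ≠ 0 := fun t =>
    hf₁.ne_zero_of_abs_sub_lt hK hθ (hx₁ ▸ one_pos) hx₁'
  have hexp : -(Real.pi ^ 2) / (2 * R * √K) = -(Real.pi * (Real.pi / (2 * √K)) / R) := by
    field_simp
  exact hG.exists_finiteMeasure_schR_eq (fun z hz h0 => (hpick z hz h0).le) hx₂ hne hR
    (by positivity) (hexp ▸ hc)

/-- If θ is smooth with `K := sup θ ∈ (0, ∞)`, `0 < R`, and Hypothesis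
(H_R) holds, then with `c := π/(R·(1 - e^{-π²/(2R√K)}))`, for every `x` there is a
nonnegative Borel measure `μ_x` supported in `[-c, c]` with
`𝒮_n^{θ,g_R}(x) = n!·∫ t^{n-1} dμ_x(t)` for all `n ≥ 1`. -/
theorem stmt5 (θ : ℝ → ℝ) (hθ : ContDiff ℝ (⊤ : ℕ∞) θ) (R : ℝ) (hR : 0 < R)
    (hHyp : HypR θ R) (hbdd : BddAbove (Set.range θ))
    (K : ℝ) (hK : K = sSup (Set.range θ)) (hKpos : 0 < K)
    (c : ℝ) (hc : c = Real.pi / (R * (1 - Real.exp (-(Real.pi ^ 2) / (2 * R * Real.sqrt K))))) :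
    ∀ (x : ℝ) (f₁ f₂ : ℝ → ℝ), IsFundPair θ x f₁ f₂ →
      ∃ μ : Measure ℝ, IsFiniteMeasure μ ∧
        μ (Set.Icc (-c) c)ᶜ = 0 ∧
        ∀ n : ℕ, 1 ≤ n →
          SchR R x f₁ f₂ n = (Nat.factorial n : ℝ) * ∫ t : ℝ, t ^ (n - 1) ∂μ := fun _ _ _ hF =>
  stmt5_general hR hHyp hKpos (fun t _ => hK ▸ le_csSup hbdd ⟨t, rfl⟩) hc hF

end
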